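/- Let r ≥ 1 be an integer and let 𝒜, ℬ be the corank-one canonical matrices of size 2r+1. A complex (2r+1)×(2r+1) matrix X belongs to 𝔤(𝒜,ℬ) if and only if there exist x₀, x₁, w, y, z ∈ ℂ such that X is the block-diagonal matrix diag(X₁, X₂), where X₁ is the r×r matrix with (X₁)_{i,i} = x₀(1 − i) + x₁·i for 0 ≤ i ≤ r−1, (X₁)_{i+1,i} = y(r − 1 − i) for 0 ≤ i ≤ r−2, (X₁)_{i,i+1} = z(i + 1) for 0 ≤ i ≤ r−2, and all other entries 0; and X₂ is the (r+1)×(r+1) matrix with (X₂)_{i,i} = (x₀ − x₁)·i + w for 0 ≤ i ≤ r, (X₂)_{i+1,i} = −z(i + 1) for 0 ≤ i ≤ r−1, (X₂)_{i,i+1} = −y(r − i) for 0 ≤ i ≤ r−1, and all other entries 0. -/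

import Mathlib

open Matrix

/-- The first corank-one canonical matrix `𝒜` of size `2r + 1`:
`𝒜_{p, r+p} = 𝒜_{r+p, p} = 1` for `0 ≤ p ≤ r − 1`, all other entries `0`. -/
def corankOneA (r : ℕ) : Matrix (Fin (2 * r + 1)) (Fin (2 * r + 1)) ℂ :=
  Matrix.of fun p q =>
    if ((q : ℕ) = (p : ℕ) + r ∧ (p : ℕ) < r) ∨ ((p : ℕ) = (q : ℕ) + r ∧ (q : ℕ) < r)
    then 1 else 0

/-- The second corank-one canonical matrix `ℬ` of size `2r + 1`:
`ℬ_{p, r+p+1} = ℬ_{r+p+1, p} = 1` for `0 ≤ p ≤ r − 1`, all other entries `0`. -/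
def corankOneB (r : ℕ) : Matrix (Fin (2 * r + 1)) (Fin (2 * r + 1)) ℂ :=
  Matrix.of fun p q =>
    if ((q : ℕ) = (p : ℕ) + r + 1 ∧ (p : ℕ) < r) ∨ ((p : ℕ) = (q : ℕ) + r + 1 ∧ (q : ℕ) < r)
    then 1 else 0


/-- The ℂ-linear map `X ↦ XᵀM + MX`. -/
noncomputable def congrDeriv {n : Type*} [Fintype n] (M : Matrix n n ℂ) :
    Matrix n n ℂ →ₗ[ℂ] Matrix n n ℂ where
  toFun X := Xᵀ * M + M * X
  map_add' X Y := by
    simp only [Matrix.transpose_add, Matrix.add_mul, Matrix.mul_add]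
    abel
  map_smul' c X := by
    simp only [Matrix.transpose_smul, Matrix.smul_mul, Matrix.mul_smul, smul_add,
      RingHom.id_apply]

/-- The Lie algebra `𝔤(A,B)` of the stabilizer of the pencil spanned by `A` and `B`,
as a ℂ-subspace of the space of matrices: all `X` such that `XᵀA + AX` and
`XᵀB + BX` lie in the span of `{A, B}`. -/
noncomputable def stabAlg {n : Type*} [Fintype n] (A B : Matrix n n ℂ) :
    Submodule ℂ (Matrix n n ℂ) :=
  Submodule.comap (congrDeriv A) (Submodule.span ℂ {A, B}) ⊓
  Submodule.comap (congrDeriv B) (Submodule.span ℂ {A, B})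


/-- The block-diagonal matrix `diag(X₁, X₂)` of Statement 11, written in the global
coordinates `0, …, 2r` (rows/columns `0, …, r−1` form the block `X₁`, rows/columns
`r, …, 2r` form the block `X₂`). -/
def stabForm (r : ℕ) (x₀ x₁ w y z : ℂ) : Matrix (Fin (2 * r + 1)) (Fin (2 * r + 1)) ℂ :=
  Matrix.of fun i j =>
    if (i : ℕ) < r ∧ (j : ℕ) < r then
      -- the block X₁: (X₁)_{i,i} = x₀(1−i) + x₁ i, (X₁)_{i+1,i} = y(r−1−i),
      -- (X₁)_{i,i+1} = z(i+1)
      if (i : ℕ) = (j : ℕ) then x₀ * (1 - (i : ℂ)) + x₁ * (i : ℂ)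
      else if (i : ℕ) = (j : ℕ) + 1 then y * ((r : ℂ) - 1 - (j : ℂ))
      else if (j : ℕ) = (i : ℕ) + 1 then z * ((i : ℂ) + 1)
      else 0
    else if r ≤ (i : ℕ) ∧ r ≤ (j : ℕ) then
      -- the block X₂ (indices shifted by r): (X₂)_{i,i} = (x₀−x₁) i + w,
      -- (X₂)_{i+1,i} = −z(i+1), (X₂)_{i,i+1} = −y(r−i)
      if (i : ℕ) = (j : ℕ) then (x₀ - x₁) * ((i : ℂ) - (r : ℂ)) + w
      else if (i : ℕ) = (j : ℕ) + 1 then -z * ((i : ℂ) - (r : ℂ))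
      else if (j : ℕ) = (i : ℕ) + 1 then -y * (2 * (r : ℂ) - (i : ℂ))
      else 0
    else 0


def auxA (r : ℕ) (i j : ℕ) : ℂ :=
  if (j = i + r ∧ i < r) ∨ (i = j + r ∧ j < r) then 1 else 0

def auxB (r : ℕ) (i j : ℕ) : ℂ :=
  if (j = i + r + 1 ∧ i < r) ∨ (i = j + r + 1 ∧ j < r) then 1 else 0

def auxLA (r : ℕ) (f : ℕ → ℕ → ℂ) (i j : ℕ) : ℂ :=
  if i < r then f (i + r) j else if i < 2 * r then f (i - r) j else 0

def auxLB (r : ℕ) (f : ℕ → ℕ → ℂ) (i j : ℕ) : ℂ :=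
  if i < r then f (i + r + 1) j else if r + 1 ≤ i then f (i - r - 1) j else 0

theorem mulA (r : ℕ) (f : ℕ → ℕ → ℂ) (X : Matrix (Fin (2 * r + 1)) (Fin (2 * r + 1)) ℂ)
    (hX : ∀ i j, X i j = f i j) (i j : Fin (2 * r + 1)) :
    (corankOneA r * X) i j = auxLA r f i j := by
  have hi := i.2
  rw [Matrix.mul_apply]
  unfold auxLA
  split_ifs with h1 h2
  · rw [Finset.sum_eq_single (⟨i + r, by omega⟩ : Fin (2 * r + 1))]
    · simp [corankOneA, hX, h1]
    · intro b _ hb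
      have hb' : (b : ℕ) ≠ i + r := fun h => hb (Fin.ext h)
      have : ¬ (((b : ℕ) = i + r ∧ (i : ℕ) < r) ∨ ((i : ℕ) = b + r ∧ (b : ℕ) < r)) := by omega
      simp [corankOneA, this]
    · simp
  · rw [Finset.sum_eq_single (⟨i - r, by omega⟩ : Fin (2 * r + 1))]
    · have : (((i : ℕ) - r = i + r ∧ (i : ℕ) < r) ∨
        ((i : ℕ) = (i : ℕ) - r + r ∧ (i : ℕ) - r < r)) := by omega
      simp only [corankOneA, Matrix.of_apply, hX, if_pos this, one_mul]
    · intro b _ hb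
      have hb' : (b : ℕ) ≠ i - r := fun h => hb (Fin.ext h)
      have : ¬ (((b : ℕ) = i + r ∧ (i : ℕ) < r) ∨ ((i : ℕ) = b + r ∧ (b : ℕ) < r)) := by omega
      simp [corankOneA, this]
    · simp
  · apply Finset.sum_eq_zero
    intro b _
    have : ¬ (((b : ℕ) = i + r ∧ (i : ℕ) < r) ∨ ((i : ℕ) = b + r ∧ (b : ℕ) < r)) := by omega
    simp [corankOneA, this]

theorem mulB (r : ℕ) (f : ℕ → ℕ → ℂ) (X : Matrix (Fin (2 * r + 1)) (Fin (2 * r + 1)) ℂ)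
    (hX : ∀ i j, X i j = f i j) (i j : Fin (2 * r + 1)) :
    (corankOneB r * X) i j = auxLB r f i j := by
  have hi := i.2
  rw [Matrix.mul_apply]
  unfold auxLB
  split_ifs with h1 h2
  · rw [Finset.sum_eq_single (⟨i + r + 1, by omega⟩ : Fin (2 * r + 1))]
    · simp [corankOneB, hX, h1]
    · intro b _ hb
      have hb' : (b : ℕ) ≠ i + r + 1 := fun h => hb (Fin.ext h)
      have : ¬ (((b : ℕ) = i + r + 1 ∧ (i : ℕ) < r) ∨ ((i : ℕ) = b + r + 1 ∧ (b : ℕ) < r)) := by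
        omega
      simp [corankOneB, this]
    · simp
  · rw [Finset.sum_eq_single (⟨i - r - 1, by omega⟩ : Fin (2 * r + 1))]
    · have : (((i : ℕ) - r - 1 = i + r + 1 ∧ (i : ℕ) < r) ∨
        ((i : ℕ) = (i : ℕ) - r - 1 + r + 1 ∧ (i : ℕ) - r - 1 < r)) := by omega
      simp only [corankOneB, Matrix.of_apply, hX, if_pos this, one_mul]
    · intro b _ hb
      have hb' : (b : ℕ) ≠ i - r - 1 := fun h => hb (Fin.ext h)
      have : ¬ (((b : ℕ) = i + r + 1 ∧ (i : ℕ) < r) ∨ ((i : ℕ) = b + r + 1 ∧ (b : ℕ) < r)) := by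
        omega
      simp [corankOneB, this]
    · simp
  · apply Finset.sum_eq_zero
    intro b _
    have : ¬ (((b : ℕ) = i + r + 1 ∧ (i : ℕ) < r) ∨ ((i : ℕ) = b + r + 1 ∧ (b : ℕ) < r)) := by
      omega
    simp [corankOneB, this]

theorem symA (r : ℕ) : (corankOneA r)ᵀ = corankOneA r := by
  ext i j
  simp only [corankOneA, Matrix.transpose_apply, Matrix.of_apply]
  congr 1
  exact propext or_comm

theorem symB (r : ℕ) : (corankOneB r)ᵀ = corankOneB r := by
  ext i j
  simp only [corankOneB, Matrix.transpose_apply, Matrix.of_apply]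
  congr 1
  exact propext or_comm

theorem congr_apply {n : Type*} [Fintype n] (M X : Matrix n n ℂ) (h : Mᵀ = M) (i j : n) :
    congrDeriv M X i j = (M * X) j i + (M * X) i j := by
  have : Xᵀ * M = (M * X)ᵀ := by rw [Matrix.transpose_mul, h]
  change (Xᵀ * M + M * X) i j = _
  rw [this]; rfl

theorem mem_iff_aux (r : ℕ) (f : ℕ → ℕ → ℂ) (X : Matrix (Fin (2 * r + 1)) (Fin (2 * r + 1)) ℂ)
    (hX : ∀ i j, X i j = f i j) :
    X ∈ stabAlg (corankOneA r) (corankOneB r) ↔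
      (∃ a b : ℂ, ∀ i j : ℕ, i < 2 * r + 1 → j < 2 * r + 1 →
        a * auxA r i j + b * auxB r i j = auxLA r f j i + auxLA r f i j) ∧
      (∃ c d : ℂ, ∀ i j : ℕ, i < 2 * r + 1 → j < 2 * r + 1 →
        c * auxA r i j + d * auxB r i j = auxLB r f j i + auxLB r f i j) := by
  unfold stabAlg
  rw [Submodule.mem_inf, Submodule.mem_comap, Submodule.mem_comap, Submodule.mem_span_pair,
    Submodule.mem_span_pair]
  have key : ∀ (M : Matrix (Fin (2 * r + 1)) (Fin (2 * r + 1)) ℂ) (a b : ℂ),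
      a • corankOneA r + b • corankOneB r = M ↔ ∀ i j : ℕ, ∀ (hi : i < 2 * r + 1)
        (hj : j < 2 * r + 1), a * auxA r i j + b * auxB r i j = M ⟨i, hi⟩ ⟨j, hj⟩ := by
    intro M a b
    constructor
    · rintro rfl i j hi hj
      rfl
    · intro h
      ext i j
      exact h i j i.2 j.2
  simp only [key, congr_apply _ _ (symA r), congr_apply _ _ (symB r), mulA r f X hX, mulB r f X hX]


def auxS (r : ℕ) (x₀ x₁ w y z : ℂ) (i j : ℕ) : ℂ :=
  if i < r ∧ j < r then
      if i = j then x₀ * (1 - (i : ℂ)) + x₁ * (i : ℂ)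
      else if i = j + 1 then y * ((r : ℂ) - 1 - (j : ℂ))
      else if j = i + 1 then z * ((i : ℂ) + 1)
      else 0
    else if r ≤ i ∧ r ≤ j then
      if i = j then (x₀ - x₁) * ((i : ℂ) - (r : ℂ)) + w
      else if i = j + 1 then -z * ((i : ℂ) - (r : ℂ))
      else if j = i + 1 then -y * (2 * (r : ℂ) - (i : ℂ))
      else 0
    else 0

theorem auxA_comm (r i j : ℕ) : auxA r i j = auxA r j i := by
  unfold auxA; congr 1; exact propext or_comm

theorem auxB_comm (r i j : ℕ) : auxB r i j = auxB r j i := by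
  unfold auxB; congr 1; exact propext or_comm

theorem LA_lo (r : ℕ) (f : ℕ → ℕ → ℂ) (i j : ℕ) (hi : i < r) : auxLA r f i j = f (i + r) j := by
  unfold auxLA; rw [if_pos hi]

theorem LA_mid (r : ℕ) (f : ℕ → ℕ → ℂ) (i j : ℕ) (hi : i < r) : auxLA r f (i + r) j = f i j := by
  unfold auxLA; rw [if_neg (by omega), if_pos (by omega), Nat.add_sub_cancel]

theorem LA_top (r : ℕ) (f : ℕ → ℕ → ℂ) (j : ℕ) : auxLA r f (r + r) j = 0 := by
  unfold auxLA; rw [if_neg (by omega), if_neg (by omega)]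

theorem LB_lo (r : ℕ) (f : ℕ → ℕ → ℂ) (i j : ℕ) (hi : i < r) :
    auxLB r f i j = f (i + 1 + r) j := by
  unfold auxLB; rw [if_pos hi, show i + r + 1 = i + 1 + r by omega]

theorem LB_mid (r : ℕ) (f : ℕ → ℕ → ℂ) (i j : ℕ) (hi : i < r) :
    auxLB r f (i + 1 + r) j = f i j := by
  unfold auxLB
  rw [if_neg (by omega), if_pos (by omega), show i + 1 + r - r - 1 = i by omega]

theorem LB_bot (r : ℕ) (f : ℕ → ℕ → ℂ) (j : ℕ) : auxLB r f r j = 0 := by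
  unfold auxLB; rw [if_neg (by omega), if_neg (by omega)]

theorem A_ll (r i j : ℕ) (hi : i < r) (hj : j < r) : auxA r i j = 0 := by
  unfold auxA; rw [if_neg (by omega)]

theorem A_hh (r i j : ℕ) : auxA r (i + r) (j + r) = 0 := by
  unfold auxA; rw [if_neg (by omega)]

theorem A_lh (r i j : ℕ) (hi : i < r) : auxA r i (j + r) = if i = j then 1 else 0 := by
  unfold auxA; congr 1; apply propext; omega

theorem B_ll (r i j : ℕ) (hi : i < r) (hj : j < r) : auxB r i j = 0 := by
  unfold auxB; rw [if_neg (by omega)]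

theorem B_hh (r i j : ℕ) : auxB r (i + r) (j + r) = 0 := by
  unfold auxB; rw [if_neg (by omega)]

theorem B_lh (r i j : ℕ) (hi : i < r) : auxB r i (j + r) = if j = i + 1 then 1 else 0 := by
  unfold auxB; congr 1; apply propext; omega

theorem S_ll (r : ℕ) (x₀ x₁ w y z : ℂ) (i j : ℕ) (hi : i < r) (hj : j < r) :
    auxS r x₀ x₁ w y z i j = if i = j then x₀ * (1 - (i : ℂ)) + x₁ * (i : ℂ)
      else if i = j + 1 then y * ((r : ℂ) - 1 - (j : ℂ))
      else if j = i + 1 then z * ((i : ℂ) + 1)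
      else 0 := by
  unfold auxS; rw [if_pos ⟨hi, hj⟩]

theorem S_lh (r : ℕ) (x₀ x₁ w y z : ℂ) (i j : ℕ) (hi : i < r) :
    auxS r x₀ x₁ w y z i (j + r) = 0 := by
  unfold auxS; rw [if_neg (by omega), if_neg (by omega)]

theorem S_hl (r : ℕ) (x₀ x₁ w y z : ℂ) (i j : ℕ) (hj : j < r) :
    auxS r x₀ x₁ w y z (i + r) j = 0 := by
  unfold auxS; rw [if_neg (by omega), if_neg (by omega)]

theorem S_hh (r : ℕ) (x₀ x₁ w y z : ℂ) (i j : ℕ) :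
    auxS r x₀ x₁ w y z (i + r) (j + r) = if i = j then (x₀ - x₁) * (i : ℂ) + w
      else if i = j + 1 then -z * (i : ℂ)
      else if j = i + 1 then -y * ((r : ℂ) - (i : ℂ))
      else 0 := by
  unfold auxS; rw [if_neg (by omega), if_pos (by omega)]
  have f1 : (i + r = j + r) ↔ i = j := by omega
  have f2 : (i + r = j + r + 1) ↔ i = j + 1 := by omega
  have f3 : (j + r = i + r + 1) ↔ j = i + 1 := by omega
  simp only [f1, f2, f3]
  push_cast
  split_ifs <;> ring

theorem bwdA (r : ℕ) (x₀ x₁ w y z : ℂ) (i j : ℕ) (hij : i ≤ j)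
    (hj : j < 2 * r + 1) :
    (x₀ + w) * auxA r i j + (-y) * auxB r i j =
      auxLA r (auxS r x₀ x₁ w y z) j i + auxLA r (auxS r x₀ x₁ w y z) i j := by
  by_cases h1 : j < r
  · have hi : i < r := by omega
    rw [A_ll r i j hi h1, B_ll r i j hi h1, LA_lo _ _ _ _ hi, LA_lo _ _ _ _ h1,
      S_hl _ _ _ _ _ _ _ _ hi, S_hl _ _ _ _ _ _ _ _ h1]
    ring
  obtain ⟨k, rfl⟩ : ∃ k, j = k + r := ⟨j - r, by omega⟩
  have hk : k < r ∨ k = r := by omega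
  by_cases h2 : r ≤ i
  · obtain ⟨l, rfl⟩ : ∃ l, i = l + r := ⟨i - r, by omega⟩
    have hl : l < r ∨ l = r := by omega
    have z1 : ∀ l k, (l < r ∨ l = r) → auxLA r (auxS r x₀ x₁ w y z) (l + r) (k + r) = 0 := by
      intro l k hl
      rcases hl with h | rfl
      · rw [LA_mid _ _ _ _ h, S_lh _ _ _ _ _ _ _ _ h]
      · rw [LA_top]
    rw [A_hh, B_hh, z1 l k hl, z1 k l hk]
    ring
  have hi : i < r := by omega
  rw [A_lh r i k hi, B_lh r i k hi, LA_lo _ _ _ _ hi, S_hh]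
  rcases hk with hk | rfl
  · rw [LA_mid _ _ _ _ hk, S_ll _ _ _ _ _ _ _ _ hk hi]
    split_ifs <;> first | (exfalso; omega) | (subst_vars; push_cast; ring)
  · rw [LA_top]
    split_ifs <;> first | (exfalso; omega) | (subst_vars; push_cast; ring)

theorem bwdB (r : ℕ) (x₀ x₁ w y z : ℂ) (i j : ℕ) (hij : i ≤ j)
    (hj : j < 2 * r + 1) :
    (-z) * auxA r i j + (x₀ + w + x₀ - x₁) * auxB r i j =
      auxLB r (auxS r x₀ x₁ w y z) j i + auxLB r (auxS r x₀ x₁ w y z) i j := by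
  by_cases h1 : j < r
  · have hi : i < r := by omega
    rw [A_ll r i j hi h1, B_ll r i j hi h1, LB_lo _ _ _ _ hi, LB_lo _ _ _ _ h1,
      S_hl _ _ _ _ _ _ _ _ hi, S_hl _ _ _ _ _ _ _ _ h1]
    ring
  obtain ⟨k, rfl⟩ : ∃ k, j = k + r := ⟨j - r, by omega⟩
  have hk : k ≤ r := by omega
  by_cases h2 : r ≤ i
  · obtain ⟨l, rfl⟩ : ∃ l, i = l + r := ⟨i - r, by omega⟩
    have hl : l ≤ r := by omega
    have z1 : ∀ l k, l ≤ r → auxLB r (auxS r x₀ x₁ w y z) (l + r) (k + r) = 0 := by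
      intro l k hl
      rcases l with _ | l
      · rw [Nat.zero_add, LB_bot]
      · rw [LB_mid _ _ _ _ hl, S_lh _ _ _ _ _ _ _ _ hl]
    rw [A_hh, B_hh, z1 l k hl, z1 k l hk]
    ring
  have hi : i < r := by omega
  rw [A_lh r i k hi, B_lh r i k hi, LB_lo _ _ _ _ hi, S_hh]
  rcases k with _ | k
  · rw [Nat.zero_add, LB_bot]
    split_ifs <;> first | (exfalso; omega) | (subst_vars; push_cast; ring)
  · rw [LB_mid _ _ _ _ hk, S_ll _ _ _ _ _ _ _ _ hk hi]
    by_cases g1 : i = k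
    · subst g1; simp; ring
    by_cases g2 : i = k + 1
    · subst g2; simp [show ¬ k = k + 1 + 1 by omega]; ring
    by_cases g3 : k = i + 1
    · subst g3; simp [show ¬ i = i + 1 + 1 by omega, show ¬ i + 1 + 1 = i by omega]; ring
    have g4 : ¬ k = i := by omega
    simp [g1, g2, g3, g4]

theorem bwd (r : ℕ) (x₀ x₁ w y z : ℂ) :
    stabForm r x₀ x₁ w y z ∈ stabAlg (corankOneA r) (corankOneB r) := by
  rw [mem_iff_aux r (auxS r x₀ x₁ w y z) (stabForm r x₀ x₁ w y z) (fun i j => rfl)]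
  refine ⟨⟨x₀ + w, -y, ?_⟩, ⟨-z, x₀ + w + x₀ - x₁, ?_⟩⟩
  · intro i j hi hj
    rcases le_total i j with h | h
    · exact bwdA r x₀ x₁ w y z i j h hj
    · rw [auxA_comm, auxB_comm, add_comm (auxLA _ _ _ _)]
      exact bwdA r x₀ x₁ w y z j i h hi
  · intro i j hi hj
    rcases le_total i j with h | h
    · exact bwdB r x₀ x₁ w y z i j h hj
    · rw [auxA_comm, auxB_comm, add_comm (auxLB _ _ _ _)]
      exact bwdB r x₀ x₁ w y z j i h hi

theorem fwd (r : ℕ) (f : ℕ → ℕ → ℂ) (α β γ δ : ℂ)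
    (hA : ∀ i j : ℕ, i < 2 * r + 1 → j < 2 * r + 1 →
        α * auxA r i j + β * auxB r i j = auxLA r f j i + auxLA r f i j)
    (hB : ∀ i j : ℕ, i < 2 * r + 1 → j < 2 * r + 1 →
        γ * auxA r i j + δ * auxB r i j = auxLB r f j i + auxLB r f i j) :
    ∀ i j, i < 2 * r + 1 → j < 2 * r + 1 →
      f i j = auxS r (α - f r r) (α - f r r - (δ - α)) (f r r) (-β) (-γ) i j := by
  -- lower-left block
  have c1 : ∀ i j, i < r → j < r → f (j + r) i + f (i + r) j = 0 := by
    intro i j hi hj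
    have := hA i j (by omega) (by omega)
    simp only [auxA, auxB, auxLA, hi, hj, if_true] at this
    rw [if_neg (by omega), if_neg (by omega)] at this
    simpa using this.symm
  have c2 : ∀ i j, i < r → j < r → f (j + r + 1) i + f (i + r + 1) j = 0 := by
    intro i j hi hj
    have := hB i j (by omega) (by omega)
    simp only [auxA, auxB, auxLB, hi, hj, if_true] at this
    rw [if_neg (by omega), if_neg (by omega)] at this
    simpa using this.symm
  have csym : ∀ k i j, j = i + k → j < r → f (i + r) j = f (j + r) i := by
    intro k
    induction k using Nat.strong_induction_on with
    | _ k ih =>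
      intro i j hk hj
      match k, hk with
      | 0, hk => simp at hk; subst hk; rfl
      | 1, hk =>
        subst hk
        have h1 := c2 i i (by omega) (by omega)
        have h2 := c1 i (i + 1) (by omega) (by omega)
        rw [show i + 1 + r = i + r + 1 by omega] at *
        linear_combination h2 - h1
      | k + 2, hk =>
        -- f (j+r) i = - f (i+1+r) (j-1) ; f (i + r) j = - f (j + r) i
        obtain ⟨l, rfl⟩ : ∃ l, j = l + 1 := ⟨j - 1, by omega⟩
        have h1 := ih k (by omega) (i + 1) l (by omega) (by omega)
        have h2 := c1 (i + 1) l (by omega) (by omega)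
        have h3 := c2 i l (by omega) (by omega)
        have h4 := c1 i (l + 1) (by omega) (by omega)
        rw [show i + 1 + r = i + r + 1 by omega, show l + 1 + r = l + r + 1 by omega] at *
        linear_combination h4 - 2 * h3 + h2 + h1
  have c0 : ∀ i j, i < r → j < r → f (i + r) j = 0 := by
    intro i j hi hj
    rcases le_total i j with h | h
    · have h1 := csym (j - i) i j (by omega) hj
      have h2 := c1 i j hi hj
      linear_combination (h1 + h2) / 2
    · have h1 := csym (i - j) j i (by omega) hi
      have h2 := c1 i j hi hj
      linear_combination (-h1 + h2) / 2
  have c0' : ∀ i j, i ≤ r → j < r → f (i + r) j = 0 := by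
    intro i j hi hj
    rcases Nat.lt_or_ge i r with h | h
    · exact c0 i j h hj
    · obtain ⟨l, rfl⟩ : ∃ l, i = l + 1 := ⟨i - 1, by omega⟩
      have h1 := c2 l j (by omega) hj
      rw [show l + 1 + r = l + r + 1 by omega]
      rcases Nat.lt_or_ge (j + 1) r with h' | h'
      · have h2 := c0 (j + 1) l h' (by omega)
        rw [show j + 1 + r = j + r + 1 by omega] at h2
        linear_combination h1 - h2
      · have : l = j := by omega
        subst this
        linear_combination h1 / 2
  -- upper-right block
  have b1 : ∀ i j, i < r → j < r → f i (j + r) + f j (i + r) = 0 := by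
    intro i j hi hj
    have := hA (i + r) (j + r) (by omega) (by omega)
    rw [A_hh, B_hh, LA_mid _ _ _ _ hi, LA_mid _ _ _ _ hj] at this
    linear_combination -this
  have b2 : ∀ i, i < r → f i (r + r) = 0 := by
    intro i hi
    have := hA (i + r) (r + r) (by omega) (by omega)
    rw [A_hh, B_hh, LA_mid _ _ _ _ hi, LA_top] at this
    linear_combination -this
  have b3 : ∀ i j, i < r → j < r → f i (j + 1 + r) + f j (i + 1 + r) = 0 := by
    intro i j hi hj
    have := hB (i + 1 + r) (j + 1 + r) (by omega) (by omega)
    rw [A_hh, B_hh, LB_mid _ _ _ _ hi, LB_mid _ _ _ _ hj] at this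
    linear_combination -this
  have b4 : ∀ i, i < r → f i r = 0 := by
    intro i hi
    have := hB (i + 1 + r) (0 + r) (by omega) (by omega)
    rw [A_hh, B_hh, LB_mid _ _ _ _ hi, Nat.zero_add, LB_bot] at this
    linear_combination -this
  have b0 : ∀ j i, i < r → j ≤ r → f i (j + r) = 0 := by
    intro j
    induction j with
    | zero => intro i hi _; simpa using b4 i hi
    | succ j ih =>
      intro i hi hj
      have h3 := b3 i j hi (by omega)
      rcases Nat.lt_or_ge (i + 1) r with h | h
      · have h1 := b1 j (i + 1) (by omega) h
        have h2 := ih (i + 1) h (by omega)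
        linear_combination h3 - h1 + h2
      · have h2 := b2 j (by omega)
        rw [show i + 1 = r by omega] at h3
        linear_combination h3 - h2
  -- diagonal blocks
  have d1 : ∀ i j, i < r → j < r → f (i + r) (j + r) + f j i =
      α * (if i = j then 1 else 0) + β * (if j = i + 1 then 1 else 0) := by
    intro i j hi hj
    have := hA i (j + r) (by omega) (by omega)
    rw [A_lh _ _ _ hi, B_lh _ _ _ hi, LA_lo _ _ _ _ hi, LA_mid _ _ _ _ hj] at this
    linear_combination -this
  have d2 : ∀ i, i < r → f (i + r) (r + r) = β * (if r = i + 1 then 1 else 0) := by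
    intro i hi
    have := hA i (r + r) (by omega) (by omega)
    rw [A_lh _ _ _ hi, B_lh _ _ _ hi, LA_lo _ _ _ _ hi, LA_top,
      if_neg (show ¬ i = r by omega)] at this
    linear_combination -this
  have d3 : ∀ i j, i < r → j < r → f (i + 1 + r) (j + 1 + r) + f j i =
      γ * (if i = j + 1 then 1 else 0) + δ * (if i = j then 1 else 0) := by
    intro i j hi hj
    have := hB i (j + 1 + r) (by omega) (by omega)
    rw [A_lh _ _ _ hi, B_lh _ _ _ hi, LB_lo _ _ _ _ hi, LB_mid _ _ _ _ hj] at this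
    have e : (j + 1 = i + 1) ↔ i = j := by omega
    simp only [e] at this
    linear_combination -this
  have d4 : ∀ i, i < r → f (i + 1 + r) r = γ * (if i = 0 then 1 else 0) := by
    intro i hi
    have := hB i (0 + r) (by omega) (by omega)
    rw [A_lh _ _ _ hi, B_lh _ _ _ hi, LB_lo _ _ _ _ hi, Nat.zero_add, LB_bot,
      if_neg (show ¬ 0 = i + 1 by omega)] at this
    linear_combination -this
  have step : ∀ i j, i < r → j < r → f (i + 1 + r) (j + 1 + r) = f (i + r) (j + r) +
      γ * (if i = j + 1 then 1 else 0) + (δ - α) * (if i = j then 1 else 0)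
      - β * (if j = i + 1 then 1 else 0) := by
    intro i j hi hj
    linear_combination d3 i j hi hj - d1 i j hi hj
  have diag : ∀ i, i ≤ r → f (i + r) (i + r) = f r r + i * (δ - α) := by
    intro i
    induction i with
    | zero => intro _; simp
    | succ i ih =>
      intro hi
      rw [step i i (by omega) (by omega), ih (by omega)]
      simp; ring
  have low1 : ∀ i, i + 1 ≤ r → f (i + 1 + r) (i + r) = γ * (i + 1) := by
    intro i
    induction i with
    | zero => intro h; simpa using d4 0 (by omega)
    | succ i ih =>
      intro hi
      rw [step (i + 1) i (by omega) (by omega), ih (by omega)]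
      simp [show ¬ i = i + 1 + 1 by omega]; ring
  have low2 : ∀ j k, j + k + 2 ≤ r → f (j + k + 2 + r) (j + r) = 0 := by
    intro j
    induction j with
    | zero => intro k h; simpa using d4 (k + 1) (by omega)
    | succ j ih =>
      intro k hi
      have := step (j + k + 2) j (by omega) (by omega)
      rw [ih k (by omega), if_neg (by omega), if_neg (by omega), if_neg (by omega)] at this
      rw [show j + 1 + k + 2 = j + k + 2 + 1 by omega, this]
      simp
  have up1 : ∀ m i, i + 1 + m = r → f (i + r) (i + 1 + r) = β * (m + 1) := by
    intro m
    induction m with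
    | zero => 
      intro i h
      have := d2 i (by omega)
      rw [if_pos (by omega)] at this
      rw [show i + 1 + r = r + r by omega, this]; simp
    | succ m ih =>
      intro i h
      have := step i (i + 1) (by omega) (by omega)
      rw [ih (i + 1) (by omega), if_neg (by omega), if_neg (by omega), if_pos (by omega)] at this
      push_cast
      linear_combination -this
  have up2 : ∀ m i k, i + k + 2 + m = r → f (i + r) (i + k + 2 + r) = 0 := by
    intro m
    induction m with
    | zero => 
      intro i k h
      have := d2 i (by omega)
      rw [if_neg (by omega)] at this
      rw [show i + k + 2 + r = r + r by omega, this]; simp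
    | succ m ih =>
      intro i k h
      have := step i (i + k + 2) (by omega) (by omega)
      rw [show i + k + 2 + 1 = i + 1 + k + 2 by omega, ih (i + 1) k (by omega),
        if_neg (by omega), if_neg (by omega), if_neg (by omega)] at this
      linear_combination -this
  have D : ∀ i j, i ≤ r → j ≤ r → f (i + r) (j + r) =
      if i = j then f r r + i * (δ - α) else if i = j + 1 then γ * i else
      if j = i + 1 then β * (r - i) else 0 := by
    intro i j hi hj
    split_ifs with h1 h2 h3
    · subst h1; exact diag i hi
    · subst h2; rw [low1 j hi]; push_cast; ring
    · subst h3
      rw [up1 (r - (i + 1)) i (by omega), Nat.cast_sub hj]; push_cast; ring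
    · rcases lt_or_ge i j with h | h
      · obtain ⟨k, rfl⟩ : ∃ k, j = i + k + 2 := ⟨j - i - 2, by omega⟩
        exact up2 (r - (i + k + 2)) i k (by omega)
      · obtain ⟨k, rfl⟩ : ∃ k, i = j + k + 2 := ⟨i - j - 2, by omega⟩
        exact low2 j k hi
  intro i j hi hj
  unfold auxS
  rcases Nat.lt_or_ge i r with h1 | h1 <;> rcases Nat.lt_or_ge j r with h2 | h2
  · rw [if_pos ⟨h1, h2⟩]
    have e := d1 j i h2 h1
    rw [D j i h2.le h1.le] at e
    by_cases g1 : i = j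
    · subst g1; simp at e ⊢; linear_combination e
    by_cases g2 : i = j + 1
    · subst g2; simp [show ¬ j = j + 1 + 1 by omega] at e ⊢; linear_combination e
    by_cases g3 : j = i + 1
    · subst g3; simp [show ¬ i = i + 1 + 1 by omega] at e ⊢; linear_combination e
    simp [g1, g2, g3, Ne.symm g1] at e ⊢
    exact e
  · obtain ⟨l, rfl⟩ : ∃ l, j = l + r := ⟨j - r, by omega⟩
    rw [if_neg (by omega), if_neg (by omega)]
    exact b0 l i h1 (by omega)
  · obtain ⟨l, rfl⟩ : ∃ l, i = l + r := ⟨i - r, by omega⟩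
    rw [if_neg (by omega), if_neg (by omega)]
    exact c0' l j (by omega) h2
  · obtain ⟨l, rfl⟩ : ∃ l, i = l + r := ⟨i - r, by omega⟩
    obtain ⟨m, rfl⟩ : ∃ m, j = m + r := ⟨j - r, by omega⟩
    rw [if_neg (by omega), if_pos ⟨h1, h2⟩, D l m (by omega) (by omega)]
    have f1 : (l + r = m + r) ↔ l = m := by omega
    have f2 : (l + r = m + r + 1) ↔ l = m + 1 := by omega
    have f3 : (m + r = l + r + 1) ↔ m = l + 1 := by omega
    simp only [f1, f2, f3]
    push_cast
    split_ifs <;> ring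

/-- A matrix `X` lies in the Lie algebra of the stabilizer of the
corank-one canonical pencil of size `2r + 1` if and only if it is of the explicit
block-diagonal tridiagonal form `stabForm r x₀ x₁ w y z` for some parameters. -/
theorem corankOne_stabilizer_mem_iff
    (r : ℕ) (hr : 1 ≤ r) (X : Matrix (Fin (2 * r + 1)) (Fin (2 * r + 1)) ℂ) :
    X ∈ stabAlg (corankOneA r) (corankOneB r) ↔
      ∃ x₀ x₁ w y z : ℂ, X = stabForm r x₀ x₁ w y z := by
  constructor
  · intro hX
    obtain ⟨f, hf⟩ : ∃ f : ℕ → ℕ → ℂ, ∀ i j, X i j = f i j :=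
      ⟨fun i j => if h : i < 2 * r + 1 ∧ j < 2 * r + 1 then
        X ⟨i, h.1⟩ ⟨j, h.2⟩ else 0, fun i j => by
          have h : (i : ℕ) < 2 * r + 1 ∧ (j : ℕ) < 2 * r + 1 := ⟨i.2, j.2⟩
          beta_reduce
          rw [dif_pos h]⟩
    rw [mem_iff_aux r f X hf] at hX
    obtain ⟨⟨α, β, hA⟩, ⟨γ, δ, hB⟩⟩ := hX
    refine ⟨α - f r r, α - f r r - (δ - α), f r r, -β, -γ, ?_⟩
    ext i j
    rw [hf i j]
    exact fwd r f α β γ δ hA hB i j i.2 j.2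
  · rintro ⟨x₀, x₁, w, y, z, rfl⟩
    exact bwd r x₀ x₁ w y z
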